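/- For all integers m, n ≥ 2 and every edge e of C_{2m} ∨ C_{2n−1} that belongs to the cycle C_{2m}, χ_la((C_{2m} ∨ C_{2n−1}) − e) = 5. -/

import Mathlib

open Finset SimpleGraph
open scoped Classical

/-- The induced vertex label (weight) of `x`: the sum of `f` over all edges incident to `x`. -/
noncomputable def vertexWeight {V : Type*} [Fintype V] (G : SimpleGraph V)
    (f : Sym2 V → ℕ) (x : V) : ℕ :=
  ∑ e ∈ G.edgeFinset.filter (fun e => x ∈ e), f e

/-- `f` is a local antimagic labeling of `G`: it restricts to a bijection from the edge set of
`G` onto `{1, …, q}` (where `q` is the number of edges), and adjacent vertices get distinct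
induced vertex labels. -/
def IsLocalAntimagic {V : Type*} [Fintype V] (G : SimpleGraph V) (f : Sym2 V → ℕ) : Prop :=
  Set.BijOn f G.edgeSet (Set.Icc 1 G.edgeSet.ncard) ∧
  ∀ ⦃x y : V⦄, G.Adj x y → vertexWeight G f x ≠ vertexWeight G f y

/-- The number of distinct induced vertex labels, `c(f)`. -/
noncomputable def colorCount {V : Type*} [Fintype V] (G : SimpleGraph V)
    (f : Sym2 V → ℕ) : ℕ :=
  (Finset.univ.image (vertexWeight G f)).card

/-- The local antimagic chromatic number `χ_la(G)`. -/
noncomputable def chiLA {V : Type*} [Fintype V] (G : SimpleGraph V) : ℕ :=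
  sInf { n | ∃ f : Sym2 V → ℕ, IsLocalAntimagic G f ∧ colorCount G f = n }

/-- The join `G ∨ H` of two vertex-disjoint graphs. -/
def joinG {α β : Type*} (G : SimpleGraph α) (H : SimpleGraph β) : SimpleGraph (α ⊕ β) :=
  SimpleGraph.fromRel (fun x y =>
    (∃ a b, x = Sum.inl a ∧ y = Sum.inl b ∧ G.Adj a b) ∨
    (∃ a b, x = Sum.inr a ∧ y = Sum.inr b ∧ H.Adj a b) ∨
    (∃ a b, x = Sum.inl a ∧ y = Sum.inr b))

/-!
The two parts of `(C_{2m} ∨ C_{2h+1}) − e` need disjoint sets of at least `2` and `3` weights, hence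
at least five weights occur. For five weights to suffice, use the labels `0, …, q − 1` on all edges
of the join, with label `0` on `e`: then deleting `e` changes no weight.

The cycles and the edges from `C_{2m}` to one vertex of `C_{2h+1}`, the root, carry the smallest
labels. The other edges carry complementary pairs of labels, arranged in a checkerboard pattern so
that all columns of the resulting `2m × 2h` block have the same sum, and the row sums depend only on
the parity of the row. The weights along `C_{2m}` then alternate between two values, those along
`C_{2h+1}` without the root between two others, and the root has the fifth.
-/

section Labelings

lemma colorable_card_of_forall_mem {V γ : Type*} {G : SimpleGraph V} {C : V → γ} {S : Finset γ}
    (hC : ∀ v, C v ∈ S) (hadj : ∀ ⦃v w⦄, G.Adj v w → C v ≠ C w) : G.Colorable #S := by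
  simpa using (Coloring.mk (G := G) (fun v => (⟨C v, hC v⟩ : S))
    fun hvw h => hadj hvw (congrArg Subtype.val h)).colorable

lemma bijOn_map_edgeSet {V W : Type*} {G : SimpleGraph V} {H : SimpleGraph W} (φ : G ≃g H) :
    Set.BijOn (Sym2.map φ) G.edgeSet H.edgeSet := by
  refine ⟨?_, (Sym2.map.injective φ.injective).injOn, ?_⟩
  · rintro ⟨x, y⟩ h
    exact φ.map_adj_iff.2 h
  · rintro ⟨x, y⟩ h
    exact ⟨s(φ.symm x, φ.symm y), φ.symm.map_adj_iff.2 h, by simp⟩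

/-- Deleting corresponding edges from isomorphic graphs. -/
def deleteEdgesSingletonIso {V W : Type*} {G : SimpleGraph V} {H : SimpleGraph W} (φ : G ≃g H)
    (e : Sym2 V) : G.deleteEdges {e} ≃g H.deleteEdges {e.map φ} where
  toEquiv := φ.toEquiv
  map_rel_iff' := by
    intro x y
    have hmap : s(φ x, φ y) = e.map φ ↔ s(x, y) = e :=
      (Sym2.map.injective φ.injective).eq_iff (a := s(x, y))
    simp [φ.map_adj_iff, hmap]

variable {V W : Type*} [Fintype V] [Fintype W] {G : SimpleGraph V} {H : SimpleGraph W}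

lemma vertexWeight_eq_sum_adj (G : SimpleGraph V) (f : Sym2 V → ℕ) (x : V) :
    vertexWeight G f x = ∑ y with G.Adj x y, f s(x, y) := by
  symm
  refine Finset.sum_nbij (fun y => s(x, y)) ?_ ?_ ?_ (fun _ _ => rfl)
  · simp
  · exact fun y _ z _ h => Sym2.congr_right.1 h
  · rintro e he
    obtain ⟨he, y, rfl⟩ : e ∈ G.edgeSet ∧ x ∈ e := by simpa using he
    exact ⟨y, by simpa using he, rfl⟩

lemma vertexWeight_comp_iso (φ : G ≃g H) (f : Sym2 W → ℕ) (x : V) :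
    vertexWeight G (f ∘ Sym2.map φ) x = vertexWeight H f (φ x) := by
  simp only [vertexWeight_eq_sum_adj]
  exact Finset.sum_equiv φ.toEquiv (by simp [φ.map_adj_iff]) (by simp)

lemma IsLocalAntimagic.comp_iso {f : Sym2 W → ℕ} (hf : IsLocalAntimagic H f) (φ : G ≃g H) :
    IsLocalAntimagic G (f ∘ Sym2.map φ) := by
  have hcard : G.edgeSet.ncard = H.edgeSet.ncard := (bijOn_map_edgeSet φ).ncard_eq
  refine ⟨hcard ▸ hf.1.comp (bijOn_map_edgeSet φ), fun x y hxy => ?_⟩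
  simpa only [vertexWeight_comp_iso] using hf.2 (φ.map_adj_iff.2 hxy)

lemma colorCount_comp_iso (φ : G ≃g H) (f : Sym2 W → ℕ) :
    colorCount G (f ∘ Sym2.map φ) = colorCount H f := by
  have himage : univ.image (vertexWeight G (f ∘ Sym2.map φ)) = univ.image (vertexWeight H f) := by
    ext v
    simp [vertexWeight_comp_iso, φ.surjective.exists]
  simp only [colorCount, himage]

theorem chiLA_congr (φ : G ≃g H) : chiLA G = chiLA H := by
  unfold chiLA
  congr 1
  ext k
  constructor
  · rintro ⟨f, hf, hk⟩
    exact ⟨_, hf.comp_iso φ.symm, (colorCount_comp_iso φ.symm f).trans hk⟩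
  · rintro ⟨f, hf, hk⟩
    exact ⟨_, hf.comp_iso φ, (colorCount_comp_iso φ f).trans hk⟩

lemma chiLA_eq_of_forall_le_colorCount {f : Sym2 V → ℕ} {k : ℕ} (hf : IsLocalAntimagic G f)
    (hfk : colorCount G f ≤ k) (hk : ∀ g, IsLocalAntimagic G g → k ≤ colorCount G g) :
    chiLA G = k :=
  IsLeast.csInf_eq ⟨⟨f, hf, hfk.antisymm (hk f hf)⟩, by rintro _ ⟨g, hg, rfl⟩; exact hk g hg⟩

lemma IsLocalAntimagic.chromaticNumber_le_colorCount {f : Sym2 V → ℕ}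
    (hf : IsLocalAntimagic G f) : G.chromaticNumber ≤ colorCount G f :=
  (colorable_card_of_forall_mem (fun x => mem_image_of_mem _ (mem_univ x)) hf.2).chromaticNumber_le

lemma vertexWeight_deleteEdges_singleton {f : Sym2 V → ℕ} {e : Sym2 V} (he : f e = 0) :
    vertexWeight (G.deleteEdges {e}) f = vertexWeight G f := by
  ext x
  simp only [vertexWeight_eq_sum_adj, deleteEdges_adj, Set.mem_singleton_iff]
  refine Finset.sum_subset (by grind) fun y _ hy => ?_
  grind

lemma colorCount_deleteEdges_singleton {f : Sym2 V → ℕ} {e : Sym2 V} (he : f e = 0) :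
    colorCount (G.deleteEdges {e}) f = colorCount G f := by
  simp only [colorCount, vertexWeight_deleteEdges_singleton he]

lemma isLocalAntimagic_deleteEdges_singleton {ι : Type*} [Fintype ι] {E : ι → Sym2 V}
    {f : Sym2 V → ℕ} {i₀ : ι} (hE : Set.range E = G.edgeSet) (hinj : (f ∘ E).Injective)
    (hlt : ∀ i, f (E i) < Fintype.card ι) (hi₀ : f (E i₀) = 0)
    (hadj : ∀ ⦃x y⦄, G.Adj x y → vertexWeight G f x ≠ vertexWeight G f y) :
    IsLocalAntimagic (G.deleteEdges {E i₀}) f := by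
  have hset : (G.deleteEdges {E i₀}).edgeSet = E '' {i₀}ᶜ := by
    rw [edgeSet_deleteEdges, ← hE, ← Set.image_univ, Set.compl_eq_univ_sdiff,
      Set.image_sdiff hinj.of_comp, Set.image_singleton]
  have hcard : (E '' {i₀}ᶜ).ncard = Fintype.card ι - 1 := by
    rw [Set.ncard_image_of_injective _ hinj.of_comp, Set.ncard_compl, Set.ncard_singleton,
      Nat.card_eq_fintype_card]
  have hmaps : Set.MapsTo f (E '' {i₀}ᶜ) (Set.Icc 1 (E '' {i₀}ᶜ).ncard) := by
    rintro _ ⟨i, hi, rfl⟩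
    have hpos : f (E i) ≠ 0 := fun h => hi (hinj (h.trans hi₀.symm))
    have := hlt i
    rw [hcard, Set.mem_Icc]
    omega
  have hinjOn : Set.InjOn f (E '' {i₀}ᶜ) := (hinj.injOn).image_of_comp
  refine ⟨hset ▸ ⟨hmaps, hinjOn, ?_⟩, fun x y hxy => ?_⟩
  · refine (Set.eq_of_subset_of_ncard_le hmaps.image_subset ?_).ge
    rw [hinjOn.ncard_image, ← coe_Icc, Set.ncard_coe_finset, Nat.card_Icc, Nat.add_sub_cancel]
  · rw [vertexWeight_deleteEdges_singleton hi₀]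
    exact hadj (deleteEdges_le _ hxy)

end Labelings

section Join

variable {α β α' : Type*} {G : SimpleGraph α} {H : SimpleGraph β}

@[simp]
lemma joinG_adj_inl_inl {a a' : α} : (joinG G H).Adj (.inl a) (.inl a') ↔ G.Adj a a' := by
  simp only [joinG, fromRel_adj]
  grind [G.ne_of_adj, G.adj_comm]

@[simp]
lemma joinG_adj_inr_inr {b b' : β} : (joinG G H).Adj (.inr b) (.inr b') ↔ H.Adj b b' := by
  simp only [joinG, fromRel_adj]
  grind [H.ne_of_adj, H.adj_comm]

@[simp]
lemma joinG_adj_inl_inr (a : α) (b : β) : (joinG G H).Adj (.inl a) (.inr b) := by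
  simp [joinG]

@[simp]
lemma joinG_adj_inr_inl (a : α) (b : β) : (joinG G H).Adj (.inr b) (.inl a) :=
  (joinG_adj_inl_inr a b).symm

lemma joinG_deleteEdges_inl (e : Sym2 α) :
    (joinG G H).deleteEdges {e.map .inl} = joinG (G.deleteEdges {e}) H := by
  ext x y
  have hinl : ∀ a a' : α, s((.inl a : α ⊕ β), .inl a') = e.map .inl ↔ s(a, a') = e := fun a a' =>
    (Sym2.map.injective Sum.inl_injective).eq_iff (a := s(a, a'))
  have hinr : ∀ (b : β) (z : α ⊕ β), s(.inr b, z) ≠ e.map .inl := by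
    intro b z h
    have hmem : .inr b ∈ e.map Sum.inl := h ▸ Sym2.mem_mk_left (.inr b) z
    simp at hmem
  have hinr' : ∀ (b : β) (z : α ⊕ β), s(z, .inr b) ≠ e.map .inl := fun b z =>
    Sym2.eq_swap ▸ hinr b z
  rcases x with a | b <;> rcases y with a' | b' <;> simp [hinl, hinr, hinr']

/-- The join of isomorphic graphs with a fixed graph. -/
def joinIsoLeft {G' : SimpleGraph α'} (φ : G ≃g G') (H : SimpleGraph β) :
    joinG G H ≃g joinG G' H where
  toEquiv := φ.toEquiv.sumCongr (.refl β)
  map_rel_iff' := by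
    rintro (a | b) (a' | b') <;> simp [φ.map_adj_iff]

lemma chiLA_joinG_deleteEdges_map {α β α' : Type*} [Fintype α] [Fintype β] [Fintype α']
    {G : SimpleGraph α} {G' : SimpleGraph α'} (φ : G ≃g G') (H : SimpleGraph β) (e : Sym2 α) :
    chiLA ((joinG G H).deleteEdges {e.map .inl}) =
      chiLA ((joinG G' H).deleteEdges {(e.map φ).map .inl}) := by
  rw [joinG_deleteEdges_inl, joinG_deleteEdges_inl]
  exact chiLA_congr (joinIsoLeft (deleteEdgesSingletonIso φ e) H)

lemma chromaticNumber_add_le_joinG (G : SimpleGraph α) (H : SimpleGraph β) :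
    G.chromaticNumber + H.chromaticNumber ≤ (joinG G H).chromaticNumber := by
  rcases eq_or_ne (joinG G H).chromaticNumber ⊤ with htop | htop
  · simp [htop]
  obtain ⟨n, hn⟩ := chromaticNumber_ne_top_iff_exists.1 htop
  obtain ⟨C⟩ := colorable_chromaticNumber hn
  set A : Finset _ := {c | ∃ a, C (.inl a) = c}
  set B : Finset _ := {c | ∃ b, C (.inr b) = c}
  have hA : G.Colorable #A := colorable_card_of_forall_mem (C := fun a => C (.inl a))
    (by simp [A]) fun a a' h => C.valid (joinG_adj_inl_inl.2 h)
  have hB : H.Colorable #B := colorable_card_of_forall_mem (C := fun b => C (.inr b))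
    (by simp [B]) fun b b' h => C.valid (joinG_adj_inr_inr.2 h)
  have hdisj : Disjoint A B := by
    simp only [A, B, Finset.disjoint_left, mem_filter, mem_univ, true_and]
    rintro _ ⟨a, rfl⟩ ⟨b, h⟩
    exact C.valid (joinG_adj_inl_inr a b) h.symm
  calc G.chromaticNumber + H.chromaticNumber ≤ #A + #B :=
        add_le_add hA.chromaticNumber_le hB.chromaticNumber_le
    _ = #(A ∪ B) := by rw [card_union_of_disjoint hdisj, Nat.cast_add]
    _ ≤ (joinG G H).chromaticNumber.toNat := by
        exact_mod_cast (card_le_univ (A ∪ B)).trans_eq (Fintype.card_fin _)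
    _ = (joinG G H).chromaticNumber := ENat.natCast_toNat htop

/-- The edge labeling of `joinG G H` given by labelings `g` of `G` and `k` of `H`, and the label
`M a b` on the edge between `a` and `b`. -/
def joinLabel (g : Sym2 α → ℕ) (k : Sym2 β → ℕ) (M : α → β → ℕ) : Sym2 (α ⊕ β) → ℕ :=
  Sym2.lift
    ⟨fun
      | .inl a, .inl a' => g s(a, a')
      | .inr b, .inr b' => k s(b, b')
      | .inl a, .inr b => M a b
      | .inr b, .inl a => M a b,
    by rintro (a | b) (a' | b') <;> simp [Sym2.eq_swap]⟩

lemma vertexWeight_joinLabel_inl [Fintype α] [Fintype β] (g : Sym2 α → ℕ) (k : Sym2 β → ℕ)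
    (M : α → β → ℕ) (a : α) :
    vertexWeight (joinG G H) (joinLabel g k M) (.inl a) = vertexWeight G g a + ∑ b, M a b := by
  simp [vertexWeight_eq_sum_adj, Finset.sum_filter, joinLabel]

lemma vertexWeight_joinLabel_inr [Fintype α] [Fintype β] (g : Sym2 α → ℕ) (k : Sym2 β → ℕ)
    (M : α → β → ℕ) (b : β) :
    vertexWeight (joinG G H) (joinLabel g k M) (.inr b) = vertexWeight H k b + ∑ a, M a b := by
  simp [vertexWeight_eq_sum_adj, Finset.sum_filter, joinLabel, add_comm]

lemma edgeSet_joinG : (joinG G H).edgeSet =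
    Sym2.map .inl '' G.edgeSet ∪
      (Sym2.map .inr '' H.edgeSet ∪ Set.range fun p : α × β => s(.inl p.1, .inr p.2)) := by
  ext e
  constructor
  · induction e using Sym2.ind with | _ x y
    rcases x with a | b <;> rcases y with a' | b' <;> intro h
    · exact .inl ⟨s(a, a'), joinG_adj_inl_inl.1 h, rfl⟩
    · exact .inr (.inr ⟨(a, b'), rfl⟩)
    · exact .inr (.inr ⟨(a', b), Sym2.eq_swap⟩)
    · exact .inr (.inl ⟨s(b, b'), joinG_adj_inr_inr.1 h, rfl⟩)
  · rintro (⟨⟨a, a'⟩, h, rfl⟩ | ⟨⟨b, b'⟩, h, rfl⟩ | ⟨⟨a, b⟩, rfl⟩)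
    · exact joinG_adj_inl_inl.2 h
    · exact joinG_adj_inr_inr.2 h
    · exact joinG_adj_inl_inr a b

/-- The edges of the join of two graphs, enumerated by enumerations `p` and `q` of their edges. -/
def joinEdge {ι κ : Type*} (p : ι → Sym2 α) (q : κ → Sym2 β) : ι ⊕ κ ⊕ α × β → Sym2 (α ⊕ β) :=
  Sum.elim (fun i => (p i).map .inl)
    (Sum.elim (fun k => (q k).map .inr) fun x => s(.inl x.1, .inr x.2))

lemma range_joinEdge {ι κ : Type*} {p : ι → Sym2 α} {q : κ → Sym2 β}
    (hp : Set.range p = G.edgeSet) (hq : Set.range q = H.edgeSet) :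
    Set.range (joinEdge p q) = (joinG G H).edgeSet := by
  simp only [joinEdge, Set.Sum.elim_range, edgeSet_joinG, ← hp, ← hq, ← Set.range_comp']

lemma joinLabel_comp_joinEdge {ι κ : Type*} (p : ι → Sym2 α) (q : κ → Sym2 β) (g : Sym2 α → ℕ)
    (k : Sym2 β → ℕ) (M : α → β → ℕ) :
    joinLabel g k M ∘ joinEdge p q = Sum.elim (g ∘ p) (Sum.elim (k ∘ q) (Function.uncurry M)) := by
  have hinl : ∀ e, joinLabel g k M (Sym2.map .inl e) = g e := Sym2.ind fun _ _ => rfl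
  have hinr : ∀ e, joinLabel g k M (Sym2.map .inr e) = k e := Sym2.ind fun _ _ => rfl
  ext (i | j | x)
  · exact hinl (p i)
  · exact hinr (q j)
  · rfl

end Join

section Cycle

variable {n : ℕ} [NeZero n]

lemma cycleGraph_adj_iff (hn : 2 ≤ n) {i j : Fin n} :
    (cycleGraph n).Adj i j ↔ j = i + 1 ∨ j = i - 1 := by
  obtain ⟨k, rfl⟩ : ∃ k, n = k + 2 := ⟨n - 2, by omega⟩
  rw [← mem_neighborSet, cycleGraph_neighborSet, Set.pair_comm, Set.mem_insert_iff,
    Set.mem_singleton_iff]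

lemma forall_fin_sub_one {P : ℕ → ℕ → Prop} (hzero : P 0 (n - 1))
    (hsucc : ∀ k, k + 1 < n → P (k + 1) k) (i : Fin n) : P i (i - 1 : Fin n) := by
  rcases eq_or_ne i 0 with rfl | hi
  · obtain ⟨k, rfl⟩ := Nat.exists_eq_succ_of_ne_zero (NeZero.ne n)
    simpa using hzero
  · have hpos : (i : ℕ) ≠ 0 := Fin.val_ne_zero_iff.2 hi
    obtain ⟨k, hk⟩ := Nat.exists_eq_succ_of_ne_zero hpos
    rw [Fin.val_sub_one_of_ne_zero hi, hk]
    exact hsucc k (by omega)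

lemma add_one_ne_sub_one (hn : 3 ≤ n) (i : Fin n) : i + 1 ≠ i - 1 := by
  obtain ⟨k, rfl⟩ : ∃ k, n = k + 3 := ⟨n - 3, by omega⟩
  rw [Ne, eq_sub_iff_add_eq, add_assoc, add_eq_left, Fin.ext_iff, Fin.val_add]
  simp [Nat.mod_eq_of_lt (show 2 < k + 3 by omega)]

lemma forall_adj_cycleGraph_ne {β : Type*} (hn : 2 ≤ n) {F : Fin n → β}
    (hF : ∀ i, F i ≠ F (i - 1)) {i j : Fin n} (hij : (cycleGraph n).Adj i j) : F i ≠ F j := by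
  rcases (cycleGraph_adj_iff hn).1 hij with rfl | rfl
  · simpa using (hF (i + 1)).symm
  · exact hF i

/-- The edge `{i, i + 1}` of the cycle on `Fin n`. -/
def cycleEdge (i : Fin n) : Sym2 (Fin n) := s(i, i + 1)

lemma cycleEdge_injective (hn : 3 ≤ n) : (cycleEdge : Fin n → Sym2 (Fin n)).Injective := by
  intro i j h
  rcases Sym2.eq_iff.1 h with ⟨h, -⟩ | ⟨rfl, h⟩
  · exact h
  · exact absurd (eq_sub_of_add_eq h) (add_one_ne_sub_one hn _)

lemma range_cycleEdge (hn : 2 ≤ n) :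
    Set.range (cycleEdge : Fin n → Sym2 (Fin n)) = (cycleGraph n).edgeSet := by
  ext ⟨i, j⟩
  change (∃ k, s(k, k + 1) = s(i, j)) ↔ (cycleGraph n).Adj i j
  rw [cycleGraph_adj_iff hn]
  constructor
  · rintro ⟨k, h⟩
    rcases Sym2.eq_iff.1 h with ⟨rfl, rfl⟩ | ⟨rfl, rfl⟩ <;> simp
  · rintro (rfl | rfl)
    · exact ⟨i, rfl⟩
    · exact ⟨i - 1, by simp [Sym2.eq_swap]⟩

/-- The labeling of the cycle on `Fin n` with label `c i` on the edge `{i, i + 1}`. -/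
noncomputable def cycleLabel (c : Fin n → ℕ) : Sym2 (Fin n) → ℕ :=
  Function.extend cycleEdge c 0

lemma cycleLabel_comp_cycleEdge (hn : 3 ≤ n) (c : Fin n → ℕ) : cycleLabel c ∘ cycleEdge = c :=
  funext ((cycleEdge_injective hn).extend_apply c 0)

lemma vertexWeight_cycleLabel (hn : 3 ≤ n) (c : Fin n → ℕ) (i : Fin n) :
    vertexWeight (cycleGraph n) (cycleLabel c) i = c i + c (i - 1) := by
  have hlabel (j : Fin n) : cycleLabel c s(j, j + 1) = c j :=
    congrFun (cycleLabel_comp_cycleEdge hn c) j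
  have hprev : cycleLabel c s(i, i - 1) = c (i - 1) := by
    rw [Sym2.eq_swap, ← hlabel (i - 1), sub_add_cancel]
  calc vertexWeight (cycleGraph n) (cycleLabel c) i
      = ∑ j ∈ {i + 1, i - 1}, cycleLabel c s(i, j) := by
        rw [vertexWeight_eq_sum_adj]
        exact Finset.sum_congr (by ext j; simp [cycleGraph_adj_iff (by omega : 2 ≤ n)])
          fun _ _ => rfl
    _ = c i + c (i - 1) := by
        rw [Finset.sum_pair (add_one_ne_sub_one hn i), hlabel, hprev]

/-- The rotation of the cycle on `Fin n` by `k` steps. -/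
def cycleRotation (hn : 2 ≤ n) (k : Fin n) : cycleGraph n ≃g cycleGraph n where
  toEquiv := Equiv.addRight k
  map_rel_iff' := by
    intro i j
    simp only [cycleGraph_adj_iff hn, Equiv.coe_addRight]
    grind

lemma map_cycleRotation_cycleEdge (hn : 2 ≤ n) (i k : Fin n) :
    (cycleEdge i).map (cycleRotation hn k) = cycleEdge (i + k) := by
  simp [cycleEdge, cycleRotation, add_right_comm]

lemma exists_iso_cycleGraph_map_eq (hn : 2 ≤ n) {e : Sym2 (Fin n)}
    (he : e ∈ (cycleGraph n).edgeSet) (i : Fin n) :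
    ∃ φ : cycleGraph n ≃g cycleGraph n, e.map φ = cycleEdge i := by
  obtain ⟨j, rfl⟩ := range_cycleEdge hn ▸ he
  exact ⟨cycleRotation hn (i - j), by rw [map_cycleRotation_cycleEdge, add_sub_cancel]⟩

lemma two_le_chromaticNumber_cycleGraph_deleteEdges (hn : 3 ≤ n) (e : Sym2 (Fin n)) :
    2 ≤ ((cycleGraph n).deleteEdges {e}).chromaticNumber := by
  obtain ⟨i, hi⟩ : ∃ i : Fin n, cycleEdge i ≠ e := by
    have : Nontrivial (Fin n) := Fin.nontrivial_iff_two_le.2 (by omega)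
    by_contra! h
    exact not_subsingleton (Fin n)
      ⟨fun i j => cycleEdge_injective hn ((h i).trans (h j).symm)⟩
  have hadj : (cycleGraph n).Adj i (i + 1) :=
    (range_cycleEdge (by omega : 2 ≤ n)).subset (Set.mem_range_self i)
  exact two_le_chromaticNumber_of_adj (deleteEdges_adj.2 ⟨hadj, hi⟩)

end Cycle

lemma five_le_colorCount {m n : ℕ} (hm : 2 ≤ m) (hn : 1 ≤ n) (e : Sym2 (Fin (2 * m)))
    {f : Sym2 (Fin (2 * m) ⊕ Fin (2 * n + 1)) → ℕ}
    (hf : IsLocalAntimagic ((joinG (cycleGraph (2 * m)) (cycleGraph (2 * n + 1))).deleteEdges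
      {e.map .inl}) f) :
    5 ≤ colorCount ((joinG (cycleGraph (2 * m)) (cycleGraph (2 * n + 1))).deleteEdges
      {e.map .inl}) f := by
  have : NeZero m := ⟨by omega⟩
  rw [joinG_deleteEdges_inl] at hf ⊢
  suffices (2 + 3 : ℕ∞) ≤ colorCount (joinG ((cycleGraph (2 * m)).deleteEdges {e})
    (cycleGraph (2 * n + 1))) f by exact_mod_cast this
  calc (2 + 3 : ℕ∞)
      ≤ ((cycleGraph (2 * m)).deleteEdges {e}).chromaticNumber +
          (cycleGraph (2 * n + 1)).chromaticNumber := by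
        rw [chromaticNumber_cycleGraph_of_odd _ (by omega) (odd_two_mul_add_one n)]
        gcongr
        exact two_le_chromaticNumber_cycleGraph_deleteEdges (by omega) e
    _ ≤ _ := chromaticNumber_add_le_joinG _ _
    _ ≤ _ := hf.chromaticNumber_le_colorCount

section Block

variable {m h i i' j j' : ℕ}

/-- The sum of two complementary labels of the block of labels `4m + 2h + 1, …, 4m + 2h + 4mh`. -/
def pairSum (m h : ℕ) : ℕ := 8 * m + 4 * h + 4 * (m * h) + 1

/-- The smaller label of the complementary pair in column `j` and rows `2 (i / 2)`,
`2 (i / 2) + 1` of the block. -/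
def lowLabel (m h i j : ℕ) : ℕ := 4 * m + 2 * h + 1 + (2 * h * (i / 2) + j)

/-- The label on the edge between vertex `i` of the even cycle and vertex `j + 1` of the odd cycle.
The two members of a complementary pair share a column, and the checkerboard pattern makes
horizontally adjacent entries nearly complementary as well. -/
def blockEntry (m h i j : ℕ) : ℕ :=
  if i % 2 = j % 2 then lowLabel m h i j else pairSum m h - lowLabel m h i j

lemma two_mul_lowLabel_lt_pairSum (hi : i < 2 * m) (hj : j < 2 * h) :
    2 * lowLabel m h i j < pairSum m h := by
  have hrow : 2 * h * (i / 2 + 1) ≤ 2 * h * m := Nat.mul_le_mul_left _ (by omega)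
  rw [mul_add_one] at hrow
  unfold lowLabel pairSum
  linarith

lemma lowLabel_inj (hj : j < 2 * h) (hj' : j' < 2 * h)
    (heq : lowLabel m h i j = lowLabel m h i' j') : i / 2 = i' / 2 ∧ j = j' := by
  have hpos : 0 < 2 * h := by omega
  replace heq : 2 * h * (i / 2) + j = 2 * h * (i' / 2) + j' := by
    unfold lowLabel at heq
    omega
  constructor
  · simpa [Nat.mul_add_div hpos, Nat.div_eq_of_lt hj, Nat.div_eq_of_lt hj'] using
      congrArg (· / (2 * h)) heq
  · simpa [Nat.mul_add_mod, Nat.mod_eq_of_lt hj, Nat.mod_eq_of_lt hj'] using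
      congrArg (· % (2 * h)) heq

lemma blockEntry_inj (hi : i < 2 * m) (hi' : i' < 2 * m) (hj : j < 2 * h) (hj' : j' < 2 * h)
    (heq : blockEntry m h i j = blockEntry m h i' j') : i = i' ∧ j = j' := by
  have hlt := two_mul_lowLabel_lt_pairSum hi hj
  have hlt' := two_mul_lowLabel_lt_pairSum hi' hj'
  have hlow : lowLabel m h i j = lowLabel m h i' j' ∧ (i % 2 = j % 2 ↔ i' % 2 = j' % 2) := by
    unfold blockEntry at heq
    split_ifs at heq <;> omega
  have hij := lowLabel_inj hj hj' hlow.1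
  omega

lemma le_blockEntry (hi : i < 2 * m) (hj : j < 2 * h) :
    4 * m + 2 * h + 1 ≤ blockEntry m h i j := by
  have hlt := two_mul_lowLabel_lt_pairSum hi hj
  have hle : 4 * m + 2 * h + 1 ≤ lowLabel m h i j := Nat.le_add_right _ _
  unfold blockEntry
  split_ifs <;> omega

lemma blockEntry_lt (hi : i < 2 * m) (hj : j < 2 * h) :
    blockEntry m h i j < 4 * m + 2 * h + 1 + 4 * (m * h) := by
  have hlt := two_mul_lowLabel_lt_pairSum hi hj
  have hle : 4 * m + 2 * h + 1 ≤ lowLabel m h i j := Nat.le_add_right _ _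
  unfold blockEntry pairSum at *
  split_ifs <;> omega

lemma sum_range_two_mul {M : Type*} [AddCommMonoid M] (F : ℕ → M) (n : ℕ) :
    ∑ i ∈ range (2 * n), F i = ∑ k ∈ range n, (F (2 * k) + F (2 * k + 1)) := by
  induction n with
  | zero => simp
  | succ n ih => rw [mul_add_one, sum_range_succ, sum_range_succ, ih, sum_range_succ, add_assoc]

lemma sum_blockEntry_row (hi : i < 2 * m) :
    ∑ j ∈ range (2 * h), blockEntry m h i j + h = h * (pairSum m h + 2 * (i % 2)) := by
  have hpair : ∀ k ∈ range h,
      blockEntry m h i (2 * k) + blockEntry m h i (2 * k + 1) + 1 =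
        pairSum m h + 2 * (i % 2) := by
    intro k hk
    rw [mem_range] at hk
    have hlt := two_mul_lowLabel_lt_pairSum hi (by omega : 2 * k + 1 < 2 * h)
    have hsucc : lowLabel m h i (2 * k + 1) = lowLabel m h i (2 * k) + 1 := rfl
    unfold blockEntry
    split_ifs <;> omega
  calc ∑ j ∈ range (2 * h), blockEntry m h i j + h
      = ∑ k ∈ range h, (blockEntry m h i (2 * k) + blockEntry m h i (2 * k + 1) + 1) := by
        simp [sum_range_two_mul, sum_add_distrib]
    _ = h * (pairSum m h + 2 * (i % 2)) := by
        rw [Finset.sum_congr rfl hpair, sum_const, card_range, smul_eq_mul]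

lemma sum_blockEntry_column (hj : j < 2 * h) :
    ∑ i ∈ range (2 * m), blockEntry m h i j = m * pairSum m h := by
  have hpair : ∀ k ∈ range m,
      blockEntry m h (2 * k) j + blockEntry m h (2 * k + 1) j = pairSum m h := by
    intro k hk
    rw [mem_range] at hk
    have hlt := two_mul_lowLabel_lt_pairSum (by omega : 2 * k < 2 * m) hj
    have hlow : lowLabel m h (2 * k + 1) j = lowLabel m h (2 * k) j := by
      unfold lowLabel
      rw [show (2 * k + 1) / 2 = 2 * k / 2 by omega]
    unfold blockEntry
    split_ifs <;> omega
  rw [sum_range_two_mul, Finset.sum_congr rfl hpair, sum_const, card_range, smul_eq_mul]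

end Block

section Core

variable {m h : ℕ} {c w d : ℕ → ℕ} {x y s : ℕ}

/-- Vertex `i` of the even cycle `C_{2m}` has cycle edges labeled `c (i - 1)`, `c i` and a spoke
labeled `w i` to vertex `0` of the odd cycle `C_{2h+1}`, whose edges are labeled by `d`. All labels
are less than the number `4m + 2h + 1` of edges concerned; `x` and `y` are the sums at the even and
odd vertices of `C_{2m}`, and `s` and `s + 1` those of consecutive labels `d`. -/
structure IsCoreLabeling (m h : ℕ) (c w d : ℕ → ℕ) (x y s : ℕ) : Prop where
  rim_inj : Set.InjOn c (Set.Iio (2 * m))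
  spoke_inj : Set.InjOn w (Set.Iio (2 * m))
  cyc_inj : Set.InjOn d (Set.Iio (2 * h + 1))
  rim_ne_spoke : ∀ i < 2 * m, ∀ j < 2 * m, c i ≠ w j
  rim_ne_cyc : ∀ i < 2 * m, ∀ j < 2 * h + 1, c i ≠ d j
  spoke_ne_cyc : ∀ i < 2 * m, ∀ j < 2 * h + 1, w i ≠ d j
  rim_lt : ∀ i < 2 * m, c i < 4 * m + 2 * h + 1
  spoke_lt : ∀ i < 2 * m, w i < 4 * m + 2 * h + 1
  cyc_lt : ∀ j < 2 * h + 1, d j < 4 * m + 2 * h + 1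
  rim_one : c 1 = 0
  row_zero : c 0 + c (2 * m - 1) + w 0 = x
  row_succ : ∀ i, i + 1 < 2 * m → c (i + 1) + c i + w (i + 1) = if (i + 1) % 2 = 0 then x else y
  column : ∀ j < 2 * h, d (j + 1) + d j = s + j % 2

/-- The labels on the edges between the even and the odd cycle: the spokes `w` in column `0`,
the block in the other columns. -/
def crossLabel (m h : ℕ) (w : ℕ → ℕ) (i : ℕ) : ℕ → ℕ
  | 0 => w i
  | j + 1 => blockEntry m h i j

lemma crossLabel_lt (hcore : IsCoreLabeling m h c w d x y s) {i j : ℕ} (hi : i < 2 * m)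
    (hj : j < 2 * h + 1) : crossLabel m h w i j < 4 * m + 2 * h + 1 + 4 * (m * h) := by
  cases j with
  | zero => exact (hcore.spoke_lt i hi).trans_le (Nat.le_add_right _ _)
  | succ j => exact blockEntry_lt hi (by omega)

lemma crossLabel_inj (hcore : IsCoreLabeling m h c w d x y s) {i i' j j' : ℕ} (hi : i < 2 * m)
    (hi' : i' < 2 * m) (hj : j < 2 * h + 1) (hj' : j' < 2 * h + 1)
    (heq : crossLabel m h w i j = crossLabel m h w i' j') : i = i' ∧ j = j' := by
  have hspoke := hcore.spoke_lt i hi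
  have hspoke' := hcore.spoke_lt i' hi'
  cases j <;> cases j' <;> simp only [crossLabel] at heq
  case zero.zero => exact ⟨hcore.spoke_inj hi hi' heq, rfl⟩
  case zero.succ j' =>
    have := le_blockEntry hi' (by omega : j' < 2 * h)
    omega
  case succ.zero j =>
    have := le_blockEntry hi (by omega : j < 2 * h)
    omega
  case succ.succ j j' =>
    have := blockEntry_inj hi hi' (by omega) (by omega) heq
    omega

lemma crossLabel_ne {a i j : ℕ} (hi : i < 2 * m) (hj : j < 2 * h + 1)
    (ha : a < 4 * m + 2 * h + 1) (hspoke : a ≠ w i) :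
    a ≠ crossLabel m h w i j := by
  cases j with
  | zero => exact hspoke
  | succ j => exact (ha.trans_le (le_blockEntry hi (by omega))).ne

lemma sum_crossLabel_row {i : ℕ} (hi : i < 2 * m) :
    ∑ j ∈ range (2 * h + 1), crossLabel m h w i j + h =
      w i + h * (pairSum m h + 2 * (i % 2)) := by
  rw [← sum_blockEntry_row hi, sum_range_succ']
  simp only [crossLabel]
  ring

/-- The weight of vertex `i` of the even cycle. -/
def rowColor (m h x y i : ℕ) : ℕ :=
  if i % 2 = 0 then x + h * pairSum m h - h else y + h * pairSum m h + h

/-- The weight of vertex `0` of the odd cycle. -/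
def rootColor (m h : ℕ) (w d : ℕ → ℕ) : ℕ := d 0 + d (2 * h) + ∑ i ∈ range (2 * m), w i

/-- The weight of vertex `j` of the odd cycle. -/
def columnColor (m h : ℕ) (w d : ℕ → ℕ) (s : ℕ) : ℕ → ℕ
  | 0 => rootColor m h w d
  | j + 1 => m * pairSum m h + s + j % 2

lemma rowColor_ne_columnColor_succ (hxy : x ≤ y) (hy : y + h < pairSum m h)
    (hs : s + 1 + h < pairSum m h) (hgap : h = m → s + 1 + h < x ∨ y + h < s) (i j : ℕ) :
    rowColor m h x y i ≠ columnColor m h w d s (j + 1) := by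
  have hle : h ≤ h * pairSum m h := Nat.le_mul_of_pos_right h (by omega)
  have hcases : h = m ∧ h * pairSum m h = m * pairSum m h ∨
      h * pairSum m h + pairSum m h ≤ m * pairSum m h ∨
      m * pairSum m h + pairSum m h ≤ h * pairSum m h := by
    simp only [← add_one_mul]
    rcases lt_trichotomy h m with hlt | heq | hlt
    · exact .inr (.inl (Nat.mul_le_mul_right _ hlt))
    · exact .inl ⟨heq, congrArg (· * pairSum m h) heq⟩
    · exact .inr (.inr (Nat.mul_le_mul_right _ hlt))
  simp only [rowColor, columnColor]
  split_ifs <;> omega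

lemma add_one_add_lt_pairSum (hcore : IsCoreLabeling m h c w d x y s) (hm : 2 ≤ m) (hh : 1 ≤ h) :
    s + 1 + h < pairSum m h := by
  have hfirst : d 1 + d 0 = s := hcore.column 0 (by omega)
  have hd₀ := hcore.cyc_lt 0 (by omega)
  have hd₁ := hcore.cyc_lt 1 (by omega)
  have hle : h ≤ m * h := Nat.le_mul_of_pos_left h (by omega)
  unfold pairSum
  omega

lemma rootColor_lt_columnColor_succ (hcore : IsCoreLabeling m h c w d x y s) (hm : 2 ≤ m)
    (hh : 1 ≤ h) (j : ℕ) :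
    rootColor m h w d < columnColor m h w d s (j + 1) := by
  have hfirst := hcore.column 0 (by omega)
  have hlast := hcore.cyc_lt (2 * h) (by omega)
  have hsum : ∑ i ∈ range (2 * m), w i ≤ 2 * m * (4 * m + 2 * h) := by
    simpa using sum_le_card_nsmul (range (2 * m)) w (4 * m + 2 * h)
      fun i hi => Nat.le_of_lt_succ (hcore.spoke_lt i (mem_range.1 hi))
  have hlarge : 4 * m + 2 * h < 4 * m * (m * h) :=
    calc 4 * m + 2 * h < 4 * (m * h) + 4 * (m * h) := by
          have hm_le : m ≤ m * h := Nat.le_mul_of_pos_right m (by omega)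
          have hh_le : h ≤ m * h := Nat.le_mul_of_pos_left h (by omega)
          omega
      _ = 4 * 2 * (m * h) := by ring
      _ ≤ 4 * m * (m * h) := by gcongr
  have hexpand : m * pairSum m h = 2 * m * (4 * m + 2 * h) + 4 * m * (m * h) + m := by
    unfold pairSum
    ring
  simp only [rootColor, columnColor]
  omega

variable [NeZero m]

/-- The labeling of `C_{2m} ∨ C_{2h+1}` that extends a core labeling `c`, `w`, `d` by the block. -/
noncomputable def extendedLabel (m h : ℕ) [NeZero m] (c w d : ℕ → ℕ) :
    Sym2 (Fin (2 * m) ⊕ Fin (2 * h + 1)) → ℕ :=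
  joinLabel (cycleLabel fun i => c i) (cycleLabel fun j => d j) fun i j => crossLabel m h w i j

lemma extendedLabel_comp_joinEdge (hm : 2 ≤ m) (hh : 1 ≤ h) :
    extendedLabel m h c w d ∘ joinEdge cycleEdge cycleEdge =
      Sum.elim (fun i : Fin (2 * m) => c i) (Sum.elim (fun j : Fin (2 * h + 1) => d j)
        fun z : Fin (2 * m) × Fin (2 * h + 1) => crossLabel m h w z.1 z.2) := by
  rw [extendedLabel, joinLabel_comp_joinEdge, cycleLabel_comp_cycleEdge (by omega),
    cycleLabel_comp_cycleEdge (by omega)]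
  rfl

lemma extendedLabel_joinEdge_lt (hcore : IsCoreLabeling m h c w d x y s) (hm : 2 ≤ m) (hh : 1 ≤ h)
    (z : Fin (2 * m) ⊕ Fin (2 * h + 1) ⊕ Fin (2 * m) × Fin (2 * h + 1)) :
    extendedLabel m h c w d (joinEdge cycleEdge cycleEdge z) <
      4 * m + 2 * h + 1 + 4 * (m * h) := by
  refine (congrFun (extendedLabel_comp_joinEdge hm hh) z).trans_lt ?_
  rcases z with i | j | ⟨i, j⟩
  · exact (hcore.rim_lt i i.2).trans_le (Nat.le_add_right _ _)
  · exact (hcore.cyc_lt j j.2).trans_le (Nat.le_add_right _ _)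
  · exact crossLabel_lt hcore i.2 j.2

lemma extendedLabel_comp_joinEdge_injective (hcore : IsCoreLabeling m h c w d x y s) (hm : 2 ≤ m)
    (hh : 1 ≤ h) :
    (extendedLabel m h c w d ∘ joinEdge cycleEdge cycleEdge).Injective := by
  rw [extendedLabel_comp_joinEdge hm hh]
  refine Function.Injective.sumElim ?_ (Function.Injective.sumElim ?_ ?_ ?_) ?_
  · exact fun i i' heq => Fin.ext (hcore.rim_inj i.2 i'.2 heq)
  · exact fun j j' heq => Fin.ext (hcore.cyc_inj j.2 j'.2 heq)
  · rintro ⟨i, j⟩ ⟨i', j'⟩ heq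
    have hij := crossLabel_inj hcore i.2 i'.2 j.2 j'.2 heq
    exact Prod.ext (Fin.ext hij.1) (Fin.ext hij.2)
  · rintro k ⟨i, j⟩
    exact crossLabel_ne i.2 j.2 (hcore.cyc_lt k k.2) (hcore.spoke_ne_cyc i i.2 k k.2).symm
  · rintro k (j | ⟨i, j⟩)
    · exact hcore.rim_ne_cyc k k.2 j j.2
    · exact crossLabel_ne i.2 j.2 (hcore.rim_lt k k.2) (hcore.rim_ne_spoke k k.2 i i.2)

lemma vertexWeight_extendedLabel_inl (hcore : IsCoreLabeling m h c w d x y s) (hm : 2 ≤ m)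
    (i : Fin (2 * m)) :
    vertexWeight (joinG (cycleGraph (2 * m)) (cycleGraph (2 * h + 1))) (extendedLabel m h c w d)
      (.inl i) = rowColor m h x y i := by
  have hrow : c i + c (i - 1 : Fin (2 * m)) + w i = if (i : ℕ) % 2 = 0 then x else y :=
    forall_fin_sub_one (P := fun a b => c a + c b + w a = if a % 2 = 0 then x else y)
      hcore.row_zero hcore.row_succ i
  have hsum := sum_crossLabel_row (h := h) (w := w) i.2
  rw [extendedLabel, vertexWeight_joinLabel_inl, vertexWeight_cycleLabel (by omega),
    Fin.sum_univ_eq_sum_range (crossLabel m h w i)]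
  unfold rowColor
  rw [mul_add] at hsum
  split_ifs at hrow ⊢ with hpar
  · rw [hpar] at hsum
    omega
  · rw [Nat.mod_two_ne_zero.1 hpar] at hsum
    omega

lemma vertexWeight_extendedLabel_inr (hcore : IsCoreLabeling m h c w d x y s) (hh : 1 ≤ h)
    (j : Fin (2 * h + 1)) :
    vertexWeight (joinG (cycleGraph (2 * m)) (cycleGraph (2 * h + 1))) (extendedLabel m h c w d)
      (.inr j) = columnColor m h w d s j := by
  rw [extendedLabel, vertexWeight_joinLabel_inr, vertexWeight_cycleLabel (by omega),
    Fin.sum_univ_eq_sum_range fun i => crossLabel m h w i j]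
  refine forall_fin_sub_one (P := fun a b => d a + d b + ∑ i ∈ range (2 * m), crossLabel m h w i a =
    columnColor m h w d s a) rfl (fun k hk => ?_) j
  simp only [crossLabel, columnColor]
  rw [sum_blockEntry_column (by omega), hcore.column k (by omega)]
  ring

lemma vertexWeight_extendedLabel_ne (hcore : IsCoreLabeling m h c w d x y s) (hm : 2 ≤ m)
    (hh : 1 ≤ h) (hxy : x ≤ y) (hy : y + h < pairSum m h)
    (hgap : h = m → s + 1 + h < x ∨ y + h < s)
    (hroot : ∀ i, rowColor m h x y i ≠ rootColor m h w d)
    ⦃u v : Fin (2 * m) ⊕ Fin (2 * h + 1)⦄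
    (huv : (joinG (cycleGraph (2 * m)) (cycleGraph (2 * h + 1))).Adj u v) :
    vertexWeight (joinG (cycleGraph (2 * m)) (cycleGraph (2 * h + 1)))
      (extendedLabel m h c w d) u ≠
    vertexWeight (joinG (cycleGraph (2 * m)) (cycleGraph (2 * h + 1)))
      (extendedLabel m h c w d) v := by
  have hle : h ≤ h * pairSum m h := Nat.le_mul_of_pos_right h (by omega)
  have hs := add_one_add_lt_pairSum hcore hm hh
  have hcross (i : Fin (2 * m)) (j : Fin (2 * h + 1)) : rowColor m h x y i ≠
      columnColor m h w d s j := by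
    cases hj : (j : ℕ) with
    | zero => exact hroot i
    | succ j => exact rowColor_ne_columnColor_succ hxy hy hs hgap i j
  rcases u with i | j <;> rcases v with i' | j' <;>
    simp only [vertexWeight_extendedLabel_inl hcore hm, vertexWeight_extendedLabel_inr hcore hh]
  · refine forall_adj_cycleGraph_ne (by omega)
      (forall_fin_sub_one (P := fun a b => rowColor m h x y a ≠ rowColor m h x y b) ?_ ?_)
      (joinG_adj_inl_inl.1 huv)
    · unfold rowColor
      split_ifs <;> omega
    · intro k _
      unfold rowColor
      split_ifs <;> omega
  · exact hcross i j'
  · exact (hcross i' j).symm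
  · refine forall_adj_cycleGraph_ne (by omega)
      (forall_fin_sub_one (P := fun a b => columnColor m h w d s a ≠ columnColor m h w d s b) ?_ ?_)
      (joinG_adj_inr_inr.1 huv)
    · obtain ⟨l, hl⟩ : ∃ l, 2 * h = l + 1 := ⟨2 * h - 1, by omega⟩
      rw [Nat.add_sub_cancel, hl]
      exact (rootColor_lt_columnColor_succ hcore hm hh l).ne
    · rintro (_ | k) _
      · exact (rootColor_lt_columnColor_succ hcore hm hh 0).ne'
      · simp only [columnColor]
        omega

lemma colorCount_extendedLabel_le (hcore : IsCoreLabeling m h c w d x y s) (hm : 2 ≤ m)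
    (hh : 1 ≤ h) :
    colorCount (joinG (cycleGraph (2 * m)) (cycleGraph (2 * h + 1)))
      (extendedLabel m h c w d) ≤ 5 := by
  let colors : Finset ℕ := {rowColor m h x y 0, rowColor m h x y 1, rootColor m h w d,
    columnColor m h w d s 1, columnColor m h w d s 2}
  refine (Finset.card_le_card (image_subset_iff.2 fun v _ => ?_)).trans
    (card_le_five : #colors ≤ 5)
  rcases v with i | j
  · rw [vertexWeight_extendedLabel_inl hcore hm]
    rcases Nat.mod_two_eq_zero_or_one i with hi | hi <;> simp [rowColor, hi]
  · rw [vertexWeight_extendedLabel_inr hcore hh]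
    rcases (j : ℕ) with _ | l
    · simp [columnColor]
    · rcases Nat.mod_two_eq_zero_or_one l with hl | hl <;> simp [columnColor, hl]

lemma IsCoreLabeling.exists_isLocalAntimagic (hcore : IsCoreLabeling m h c w d x y s)
    (hm : 2 ≤ m) (hh : 1 ≤ h) (hxy : x ≤ y) (hy : y + h < pairSum m h)
    (hgap : h = m → s + 1 + h < x ∨ y + h < s)
    (hroot : ∀ i, rowColor m h x y i ≠ rootColor m h w d) :
    ∃ f, IsLocalAntimagic ((joinG (cycleGraph (2 * m)) (cycleGraph (2 * h + 1))).deleteEdges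
        {(cycleEdge 1).map .inl}) f ∧
      colorCount ((joinG (cycleGraph (2 * m)) (cycleGraph (2 * h + 1))).deleteEdges
        {(cycleEdge 1).map .inl}) f ≤ 5 := by
  have hzero : extendedLabel m h c w d (joinEdge cycleEdge cycleEdge (.inl 1)) = 0 := by
    have hone : ((1 : Fin (2 * m)) : ℕ) = 1 := by
      rw [Fin.val_one', Nat.mod_eq_of_lt (by omega)]
    refine (congrFun (extendedLabel_comp_joinEdge hm hh) (.inl 1)).trans ?_
    rw [Sum.elim_inl, hone, hcore.rim_one]
  refine ⟨extendedLabel m h c w d, isLocalAntimagic_deleteEdges_singleton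
    (E := joinEdge cycleEdge cycleEdge) (i₀ := .inl 1)
    (range_joinEdge (range_cycleEdge (by omega)) (range_cycleEdge (by omega)))
    (extendedLabel_comp_joinEdge_injective hcore hm hh) (fun z => ?_) hzero
    (vertexWeight_extendedLabel_ne hcore hm hh hxy hy hgap hroot),
    (colorCount_deleteEdges_singleton hzero).trans_le (colorCount_extendedLabel_le hcore hm hh)⟩
  refine (extendedLabel_joinEdge_lt hcore hm hh z).trans_eq ?_
  simp only [Fintype.card_sum, Fintype.card_prod, Fintype.card_fin]
  ring

end Core

section Zigzag

variable {a b h j : ℕ}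

/-- The sequence `a, b, a + 1, b - 1, a + 2, …`, whose consecutive sums alternate between `a + b`
and `a + b + 1`. -/
def zigzag (a b j : ℕ) : ℕ := if j % 2 = 0 then a + j / 2 else b - j / 2

lemma zigzag_succ_add (hb : h ≤ b) (hj : j < 2 * h) :
    zigzag a b (j + 1) + zigzag a b j = a + b + j % 2 := by
  unfold zigzag
  split_ifs <;> omega

lemma zigzag_bounds (hj : j < 2 * h + 1) :
    a ≤ zigzag a b j ∧ zigzag a b j ≤ a + h ∨ b < zigzag a b j + h ∧ zigzag a b j ≤ b := by
  unfold zigzag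
  split_ifs <;> omega

lemma injOn_zigzag (hab : a + 2 * h ≤ b ∨ b < a) (hb : h ≤ b) :
    Set.InjOn (zigzag a b) (Set.Iio (2 * h + 1)) := by
  intro j hj j' hj' heq
  simp only [Set.mem_Iio, zigzag] at hj hj' heq
  split_ifs at heq <;> omega

lemma zigzag_mem_Ico {k : ℕ} (hab : a = k ∧ b = k + 2 * h ∨ a = k + h ∧ b + 1 = k + h)
    (hj : j < 2 * h + 1) :
    zigzag a b j ∈ Set.Ico k (k + 2 * h + 1) := by
  have := zigzag_bounds (a := a) (b := b) hj
  rw [Set.mem_Ico]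
  omega

end Zigzag

lemma IsCoreLabeling.two_mul_sum_rim_add_sum_spoke {m h : ℕ} {c w d : ℕ → ℕ} {x y s : ℕ}
    (hcore : IsCoreLabeling m h c w d x y s) :
    2 * ∑ i ∈ range (2 * m), c i + ∑ i ∈ range (2 * m), w i = m * (x + y) := by
  rcases eq_or_ne m 0 with rfl | hm
  · simp
  obtain ⟨N, hN⟩ : ∃ N, 2 * m = N + 1 := ⟨2 * m - 1, by omega⟩
  have hzero : c 0 + c N + w 0 = x := by simpa [hN] using hcore.row_zero
  calc 2 * ∑ i ∈ range (2 * m), c i + ∑ i ∈ range (2 * m), w i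
      = ∑ i ∈ range N, (c (i + 1) + c i + w (i + 1)) + (c 0 + c N + w 0) := by
        rw [hN, two_mul]
        nth_rw 1 [sum_range_succ']
        rw [sum_range_succ, sum_range_succ' w, sum_add_distrib, sum_add_distrib]
        ring
    _ = ∑ i ∈ range N, (if (i + 1) % 2 = 0 then x else y) + (if 0 % 2 = 0 then x else y) := by
        rw [hzero, Finset.sum_congr rfl fun i hi =>
          hcore.row_succ i (by rw [hN]; exact Nat.succ_lt_succ (mem_range.1 hi))]
        rfl
    _ = m * (x + y) := by
        rw [← sum_range_succ' (fun i => if i % 2 = 0 then x else y), ← hN, sum_range_two_mul,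
          Finset.sum_congr rfl (g := fun _ => x + y) fun k _ => by simp [Nat.add_mod],
          sum_const, card_range, smul_eq_mul]

section EvenCase

variable {t h : ℕ}

/-- The labels on the edges of the cycle `C_{2m}`, for `m = 2t`. -/
def evenRim (t h i : ℕ) : ℕ :=
  if i % 2 = 0 then 2 * t + h + 1 + i / 2
  else if i / 2 < t then i / 2 else i / 2 + h + 1

/-- The labels on the spokes at the cycle `C_{2m}`, for `m = 2t`: the sums of consecutive rim labels
are distinct, and these labels complement them to the constant `10t + 3h + 1`. -/
def evenSpoke (t h i : ℕ) : ℕ :=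
  if i = 0 then 6 * t + h else if i ≤ 2 * t then 8 * t + 2 * h + 1 - i else 8 * t + h - i

lemma injOn_evenRim : Set.InjOn (evenRim t h) (Set.Iio (2 * (2 * t))) := by
  intro i hi i' hi' heq
  simp only [Set.mem_Iio, evenRim] at hi hi' heq
  split_ifs at heq <;> omega

lemma injOn_evenSpoke : Set.InjOn (evenSpoke t h) (Set.Iio (2 * (2 * t))) := by
  intro i hi i' hi' heq
  simp only [Set.mem_Iio, evenSpoke] at hi hi' heq
  split_ifs at heq <;> omega

lemma evenRim_ne_evenSpoke {i i' : ℕ} (hi : i < 2 * (2 * t)) (hi' : i' < 2 * (2 * t)) :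
    evenRim t h i ≠ evenSpoke t h i' := by
  unfold evenRim evenSpoke
  split_ifs <;> omega

lemma isCoreLabeling_evenRim_evenSpoke (ht : 1 ≤ t) :
    IsCoreLabeling (2 * t) h (evenRim t h) (evenSpoke t h) (zigzag t (6 * t + 2 * h))
      (10 * t + 3 * h + 1) (10 * t + 3 * h + 1) (7 * t + 2 * h) where
  rim_inj := injOn_evenRim
  spoke_inj := injOn_evenSpoke
  cyc_inj := injOn_zigzag (by omega) (by omega)
  rim_ne_spoke i hi i' hi' := evenRim_ne_evenSpoke hi hi'
  rim_ne_cyc i hi j hj := by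
    have := zigzag_bounds (a := t) (b := 6 * t + 2 * h) hj
    unfold evenRim
    split_ifs <;> omega
  spoke_ne_cyc i hi j hj := by
    have := zigzag_bounds (a := t) (b := 6 * t + 2 * h) hj
    unfold evenSpoke
    split_ifs <;> omega
  rim_lt i hi := by
    unfold evenRim
    split_ifs <;> omega
  spoke_lt i hi := by
    unfold evenSpoke
    split_ifs <;> omega
  cyc_lt j hj := by
    have := zigzag_bounds (a := t) (b := 6 * t + 2 * h) hj
    omega
  rim_one := by simp [evenRim, Nat.pos_iff_ne_zero.1 ht]
  row_zero := by
    unfold evenRim evenSpoke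
    split_ifs <;> omega
  row_succ i hi := by
    unfold evenRim evenSpoke
    rw [if_neg i.succ_ne_zero]
    split_ifs <;> omega
  column j hj := by
    rw [zigzag_succ_add (by omega : h ≤ 6 * t + 2 * h) hj]
    ring

lemma rowColor_ne_rootColor_even (ht : 1 ≤ t) (i : ℕ) :
    rowColor (2 * t) h (10 * t + 3 * h + 1) (10 * t + 3 * h + 1) i ≠
      rootColor (2 * t) h (evenSpoke t h) (zigzag t (6 * t + 2 * h)) := by
  have hsum := (isCoreLabeling_evenRim_evenSpoke (h := h) ht).two_mul_sum_rim_add_sum_spoke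
  have hpairSum : h * pairSum (2 * t) h = 2 * (h * (8 * t + 2 * h + 4 * (t * h))) + h := by
    unfold pairSum
    ring
  rw [mul_assoc 2 t] at hsum
  -- Both row colors have the parity of `h + 1`, the root color that of `h`.
  unfold rowColor rootColor zigzag
  split_ifs <;> omega

end EvenCase

section OddCase

variable {r h : ℕ}

/-- The labels on the edges of the cycle `C_{2m}`, for `m = 2r + 1`. -/
def oddRim (r i : ℕ) : ℕ :=
  if i % 2 = 1 then i / 2
  else if i / 2 % 2 = 0 then 3 * r + 1 - i / 4 else 4 * r + 1 - i / 4

/-- The labels on the spokes at the cycle `C_{2m}`, for `m = 2r + 1`: they complement the sums of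
consecutive rim labels to `9r + 3` at even and to `11r + 4` at odd vertices. -/
def oddSpoke (r i : ℕ) : ℕ :=
  if i = 0 then 4 * r + 2
  else if i % 2 = 0 then
    if i / 2 % 2 = 0 then 6 * r + 3 - i / 4 else 5 * r + 2 - i / 4
  else
    if i / 2 % 2 = 0 then 8 * r + 3 - i / 4 else 7 * r + 2 - i / 4

lemma oddRim_lt {i : ℕ} (hi : i < 2 * (2 * r + 1)) : oddRim r i < 4 * r + 2 := by
  unfold oddRim
  split_ifs <;> omega

lemma oddSpoke_mem {i : ℕ} (hi : i < 2 * (2 * r + 1)) :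
    oddSpoke r i ∈ Set.Ico (4 * r + 2) (8 * r + 4) := by
  rw [Set.mem_Ico]
  unfold oddSpoke
  split_ifs <;> omega

lemma injOn_oddRim : Set.InjOn (oddRim r) (Set.Iio (2 * (2 * r + 1))) := by
  intro i hi i' hi' heq
  simp only [Set.mem_Iio, oddRim] at hi hi' heq
  split_ifs at heq <;> omega

lemma injOn_oddSpoke : Set.InjOn (oddSpoke r) (Set.Iio (2 * (2 * r + 1))) := by
  intro i hi i' hi' heq
  simp only [Set.mem_Iio, oddSpoke] at hi hi' heq
  split_ifs at heq <;> omega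

lemma isCoreLabeling_oddRim_oddSpoke {a b : ℕ}
    (hab : a = 8 * r + 4 ∧ b = 8 * r + 4 + 2 * h ∨ a = 8 * r + 4 + h ∧ b + 1 = 8 * r + 4 + h) :
    IsCoreLabeling (2 * r + 1) h (oddRim r) (oddSpoke r) (zigzag a b) (9 * r + 3) (11 * r + 4)
      (a + b) where
  rim_inj := injOn_oddRim
  spoke_inj := injOn_oddSpoke
  cyc_inj := injOn_zigzag (by omega) (by omega)
  rim_ne_spoke i hi i' hi' := ((oddRim_lt hi).trans_le (oddSpoke_mem hi').1).ne
  rim_ne_cyc i hi j hj := by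
    have := oddRim_lt hi
    have := (zigzag_mem_Ico hab hj).1
    omega
  spoke_ne_cyc i hi j hj :=
    ((oddSpoke_mem hi).2.trans_le (zigzag_mem_Ico hab hj).1).ne
  rim_lt i hi := by
    have := oddRim_lt hi
    omega
  spoke_lt i hi := by
    have := (oddSpoke_mem hi).2
    omega
  cyc_lt j hj := by
    have := (zigzag_mem_Ico hab hj).2
    omega
  rim_one := rfl
  row_zero := by
    have hfirst : oddRim r 0 = 3 * r + 1 := rfl
    have hlast : oddRim r (2 * (2 * r + 1) - 1) = 2 * r := by
      unfold oddRim
      split_ifs <;> omega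
    have hspoke : oddSpoke r 0 = 4 * r + 2 := rfl
    omega
  row_succ i hi := by
    unfold oddRim oddSpoke
    rw [if_neg i.succ_ne_zero]
    split_ifs <;> omega
  column j hj := zigzag_succ_add (by omega) hj

lemma exists_rowColor_ne_rootColor_odd (r : ℕ) (hh : 1 ≤ h) :
    ∃ a b, (a = 8 * r + 4 ∧ b = 8 * r + 4 + 2 * h ∨ a = 8 * r + 4 + h ∧ b + 1 = 8 * r + 4 + h) ∧
      ∀ i, rowColor (2 * r + 1) h (9 * r + 3) (11 * r + 4) i ≠
        rootColor (2 * r + 1) h (oddSpoke r) (zigzag a b) := by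
  have hle : h ≤ h * pairSum (2 * r + 1) h :=
    Nat.le_mul_of_pos_right h (by unfold pairSum; omega)
  have hroot (a b : ℕ) : rootColor (2 * r + 1) h (oddSpoke r) (zigzag a b) =
      2 * a + h + ∑ i ∈ range (2 * (2 * r + 1)), oddSpoke r i := by
    have hlast : zigzag a b (2 * h) = a + h := by simp [zigzag]
    rw [rootColor, hlast, show zigzag a b 0 = a from rfl]
    ring
  -- The two root colors differ by `2 * h`, the two row colors by `2 * h + 2 * r + 1`.
  by_contra! hall
  obtain ⟨i, hi⟩ := hall _ _ (.inl ⟨rfl, rfl⟩)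
  obtain ⟨i', hi'⟩ := hall _ (8 * r + 3 + h) (.inr ⟨rfl, by omega⟩)
  rw [hroot] at hi hi'
  unfold rowColor at hi hi'
  split_ifs at hi hi' <;> omega

end OddCase

lemma exists_isLocalAntimagic_colorCount_le_five {m h : ℕ} [NeZero m] (hm : 2 ≤ m) (hh : 1 ≤ h) :
    ∃ f, IsLocalAntimagic ((joinG (cycleGraph (2 * m)) (cycleGraph (2 * h + 1))).deleteEdges
        {(cycleEdge 1).map .inl}) f ∧
      colorCount ((joinG (cycleGraph (2 * m)) (cycleGraph (2 * h + 1))).deleteEdges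
        {(cycleEdge 1).map .inl}) f ≤ 5 := by
  rcases Nat.even_or_odd' m with ⟨t, rfl | rfl⟩
  · refine (isCoreLabeling_evenRim_evenSpoke (by omega : 1 ≤ t)).exists_isLocalAntimagic hm hh
      le_rfl ?_ (by omega) (rowColor_ne_rootColor_even (by omega))
    unfold pairSum
    omega
  · obtain ⟨a, b, hab, hroot⟩ := exists_rowColor_ne_rootColor_odd t hh
    refine (isCoreLabeling_oddRim_oddSpoke hab).exists_isLocalAntimagic hm hh
      (by omega) ?_ (by omega) hroot
    unfold pairSum
    omega

/-- Theorem: For all integers `m, n ≥ 2` and every edge `e` of `C_{2m} ∨ C_{2n−1}` that belongs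
to the cycle `C_{2m}` (i.e. `e` is the image under the left inclusion of an edge of `C_{2m}`),
`χ_la((C_{2m} ∨ C_{2n−1}) − e) = 5`. -/
theorem chiLA_evenCycle_join_oddCycle_deleteCycleEdge (m n : ℕ) (hm : 2 ≤ m) (hn : 2 ≤ n)
    (e : Sym2 (Fin (2 * m))) (he : e ∈ (cycleGraph (2 * m)).edgeSet) :
    chiLA ((joinG (cycleGraph (2 * m)) (cycleGraph (2 * n - 1))).deleteEdges
      {Sym2.map Sum.inl e}) = 5 := by
  have : NeZero m := ⟨by omega⟩
  obtain ⟨h, rfl⟩ : ∃ h, n = h + 1 := ⟨n - 1, by omega⟩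
  rw [show 2 * (h + 1) - 1 = 2 * h + 1 by omega]
  obtain ⟨φ, hφ⟩ := exists_iso_cycleGraph_map_eq (by omega) he 1
  rw [chiLA_joinG_deleteEdges_map φ, hφ]
  obtain ⟨f, hf, hcolors⟩ := exists_isLocalAntimagic_colorCount_le_five hm (by omega : 1 ≤ h)
  exact chiLA_eq_of_forall_le_colorCount hf hcolors
    fun g hg => five_le_colorCount hm (by omega) (cycleEdge 1) hg
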